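/- arXiv:1505.00617 — 2 statements merged into one kernel-verified Lean document; each statement's English description precedes it below -/
import Mathlib

section
/- Let I ⊆ ℝ be a nondegenerate interval, n ∈ ℕ, let ω = (ω_1,…,ω_n) be an n-dimensional positive Chebyshev system over I, and let ω_{n+1} : I → ℝ be such that ω* = (ω_1,…,ω_n,ω_{n+1}) is an (n+1)-dimensional positive Chebyshev system over I. Let f : I → ℝ. Then, for every x, y ∈ I with x < y, there exists p ∈ [x,y] such that [x, ((n−1)x+y)/n, ((n−2)x+2y)/n, …, (x+(n−1)y)/n, y; f]_{ω*} ≥ D̲_{(𝟏_n,ω*)} f(p). -/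
/-- `Phi ω x` is the determinant `det(ωᵢ(xⱼ))` of an `n`-tuple of functions
evaluated at an `n`-tuple of points. -/
noncomputable def Phi {n : ℕ} (ω : Fin n → ℝ → ℝ) (x : Fin n → ℝ) : ℝ :=
  (Matrix.of fun i j => ω i (x j)).det

/-- `ω` is an `n`-dimensional positive Chebyshev system over `H`:
`Phi ω` is positive on all strictly increasing `n`-tuples of elements of `H`. -/
def IsPosChebyshev {n : ℕ} (ω : Fin n → ℝ → ℝ) (H : Set ℝ) : Prop :=
  ∀ x : Fin n → ℝ, StrictMono x → (∀ j, x j ∈ H) → 0 < Phi ω x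

/-- The generalized `ω*`-divided difference `[x₀,…,xₙ; f]_{ω*}`, where
`ω* = (ω₁,…,ωₙ,ω')`:  `Φ_{(ω,f)}(x) / Φ_{ω*}(x)`. -/
noncomputable def divDiff {n : ℕ} (ω : Fin n → ℝ → ℝ) (ω' : ℝ → ℝ) (f : ℝ → ℝ)
    (x : Fin (n + 1) → ℝ) : ℝ :=
  Phi (Fin.snoc ω f) x / Phi (Fin.snoc ω ω') x

/-- The partial sum `t₁ + ⋯ + tⱼ` (empty for `j = 0`, everything for `j = n`). -/
noncomputable def psum {n : ℕ} (t : Fin n → ℝ) (j : Fin (n + 1)) : ℝ :=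
  ∑ i ∈ Finset.univ.filter (fun i : Fin n => (i : ℕ) < (j : ℕ)), t i

/-- `f` is `(t,ω)`-convex on `J`:
`Φ_{(ω,f)}(x, x+t₁h, x+(t₁+t₂)h, …, x+(t₁+⋯+tₙ)h) ≥ 0`
for all `x ∈ J` and `h > 0` with `x+(t₁+⋯+tₙ)h ∈ J`. -/
def TOmegaConvexOn {n : ℕ} (ω : Fin n → ℝ → ℝ) (t : Fin n → ℝ) (J : Set ℝ) (f : ℝ → ℝ) : Prop :=
  ∀ x ∈ J, ∀ h : ℝ, 0 < h → x + psum t (Fin.last n) * h ∈ J →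
    0 ≤ Phi (Fin.snoc ω f) (fun j => x + psum t j * h)

/-- The tuple `x, ((T−s₁)x+s₁y)/T, …, ((T−s_{n−1})x+s_{n−1}y)/T, y`
where `sⱼ = t₁+⋯+tⱼ` and `T = sₙ`. -/
noncomputable def jpts {n : ℕ} (t : Fin n → ℝ) (x y : ℝ) : Fin (n + 1) → ℝ :=
  fun j => ((psum t (Fin.last n) - psum t j) * x + psum t j * y) / psum t (Fin.last n)

/-- The lower Dinghas type derivative `D̲_{(t,ω*)} f(p)`: the limit, as `δ → 0⁺`, of
the infimum of `[x, ((T−s₁)x+s₁y)/T, …, y; f]_{ω*}` over `x,y ∈ I` with `x < y`,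
`x ≤ p ≤ y`, `y − x < δ`; realized as a `liminf` (with values in `EReal`). -/
noncomputable def dinghasT {n : ℕ} (ω : Fin n → ℝ → ℝ) (ω' : ℝ → ℝ) (t : Fin n → ℝ)
    (f : ℝ → ℝ) (I : Set ℝ) (p : ℝ) : EReal :=
  Filter.liminf (fun q : ℝ × ℝ => (divDiff ω ω' f (jpts t q.1 q.2) : EReal))
    (⨅ δ ∈ Set.Ioi (0 : ℝ), Filter.principal
      {q : ℝ × ℝ | q.1 ∈ I ∧ q.2 ∈ I ∧ q.1 < q.2 ∧ q.1 ≤ p ∧ p ≤ q.2 ∧ q.2 - q.1 < δ})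

/-! Refine the `n + 1` equidistant points of `[x, y]` to a grid of half their step. If every window
of `n + 1` consecutive grid points had a divided difference exceeding the value `c` on `[x, y]`,
then `Φ_{(ω, f - c ω')}` would be positive on all windows. Positivity spreads from windows to
arbitrary increasing tuples of grid points by filling gaps: deleting an interior point from `n + 2`
points gives a positive determinant whenever deleting the first and deleting the last both do.
Since `Φ_{(ω, f - c ω')}` vanishes on the original tuple, some window, which is the equidistant
tuple of a subinterval of half the length, has divided difference at most `c`. Iterating, the nested
intervals shrink to the required `p`. -/

open Filter Set

section Determinants

variable {n : ℕ} {ω : Fin n → ℝ → ℝ} {H : Set ℝ}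

theorem Phi_snoc_eq_sum (ω : Fin n → ℝ → ℝ) (g : ℝ → ℝ) (z : Fin (n + 1) → ℝ) :
    Phi (Fin.snoc ω g) z =
      ∑ j : Fin (n + 1), (-1) ^ (n + (j : ℕ)) * g (z j) * Phi ω (j.removeNth z) := by
  have minor (j : Fin (n + 1)) :
      (Matrix.of fun i l => (Fin.snoc ω g : Fin (n + 1) → ℝ → ℝ) i (z l)).submatrix
        (Fin.last n).succAbove j.succAbove = Matrix.of fun i l => ω i (j.removeNth z l) := by
    ext i l
    simp [Fin.removeNth]
  simp only [Phi, Matrix.det_succ_row _ (Fin.last n), minor, Matrix.of_apply, Fin.snoc_last,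
    Fin.val_last]

/-- The linear functional `g ↦ Φ_{(ω,g)}(z)`, bundled so that determinants of linear combinations
of functions can be expanded. -/
noncomputable def phiLinear (ω : Fin n → ℝ → ℝ) (z : Fin (n + 1) → ℝ) : (ℝ → ℝ) →ₗ[ℝ] ℝ where
  toFun g := Phi (Fin.snoc ω g) z
  map_add' f g := by
    simp only [Phi_snoc_eq_sum, Pi.add_apply, mul_add, add_mul, Finset.sum_add_distrib]
  map_smul' c g := by
    simp only [Phi_snoc_eq_sum, Pi.smul_apply, smul_eq_mul, RingHom.id_apply, Finset.mul_sum]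
    exact Finset.sum_congr rfl fun j _ => by ring

theorem phiLinear_apply (z : Fin (n + 1) → ℝ) (g : ℝ → ℝ) :
    phiLinear ω z g = Phi (Fin.snoc ω g) z := rfl

theorem phiLinear_apply_self (z : Fin (n + 1) → ℝ) (i : Fin n) : phiLinear ω z (ω i) = 0 :=
  Matrix.det_zero_of_row_eq (Fin.castSucc_lt_last i).ne (by ext; simp)

theorem exists_eq_zero_and_Phi_snoc_eq {v : Fin n → ℝ} (hv : Phi ω v ≠ 0) (g : ℝ → ℝ) :
    ∃ e : ℝ → ℝ, (∀ j, e (v j) = 0) ∧ ∀ z, Phi (Fin.snoc ω e) z = Phi (Fin.snoc ω g) z := by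
  obtain ⟨c, hc⟩ := Matrix.vecMul_surjective_iff_isUnit.2
    ((Matrix.isUnit_iff_isUnit_det _).2 hv.isUnit) (g ∘ v)
  refine ⟨g - ∑ i, c i • ω i, fun j => ?_, fun z => ?_⟩
  · have interpolates : ∑ i, c i * ω i (v j) = g (v j) := congrFun hc j
    simp [interpolates]
  · simp [← phiLinear_apply, phiLinear_apply_self]

theorem Phi_snoc_of_init_eq_zero {g : ℝ → ℝ} {z : Fin (n + 1) → ℝ}
    (hg : ∀ j, g (Fin.init z j) = 0) :
    Phi (Fin.snoc ω g) z = g (z (Fin.last n)) * Phi ω (Fin.init z) := by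
  have hg' (j : Fin n) : g (z j.castSucc) = 0 := hg j
  simp [Phi_snoc_eq_sum, Fin.sum_univ_castSucc, hg', ← two_mul]

theorem Phi_snoc_of_tail_eq_zero {g : ℝ → ℝ} {z : Fin (n + 1) → ℝ}
    (hg : ∀ j, g (Fin.tail z j) = 0) :
    Phi (Fin.snoc ω g) z = (-1) ^ n * g (z 0) * Phi ω (Fin.tail z) := by
  have hg' (j : Fin n) : g (z j.succ) = 0 := hg j
  simp [Phi_snoc_eq_sum, Fin.sum_univ_succ, hg']

theorem Phi_snoc_of_interior_eq_zero {ω : Fin (n + 1) → ℝ → ℝ} {g : ℝ → ℝ}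
    {z : Fin (n + 2) → ℝ} (hg : ∀ j, g (Fin.init (Fin.tail z) j) = 0) :
    Phi (Fin.snoc ω g) z =
      (-1) ^ (n + 1) * g (z 0) * Phi ω (Fin.tail z) +
        g (z (Fin.last (n + 1))) * Phi ω (Fin.init z) := by
  have hg' (j : Fin n) : g (z j.castSucc.succ) = 0 := hg j
  simp [Phi_snoc_eq_sum, Fin.sum_univ_succ (n := n + 1), Fin.sum_univ_castSucc (n := n), hg',
    ← two_mul, Fin.succ_last]

-- Subtracting the interpolant of `g` at the interior points changes none of the determinants, and
-- leaves a function whose signs at the two end points are read off from `htail` and `hinit`.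
theorem IsPosChebyshev.Phi_snoc_removeNth_pos (hω : IsPosChebyshev ω H) {g : ℝ → ℝ}
    {z : Fin (n + 2) → ℝ} (hz : StrictMono z) (hzH : ∀ j, z j ∈ H)
    (htail : 0 < Phi (Fin.snoc ω g) (Fin.tail z)) (hinit : 0 < Phi (Fin.snoc ω g) (Fin.init z))
    (k : Fin n) : 0 < Phi (Fin.snoc ω g) (k.castSucc.succ.removeNth z) := by
  obtain ⟨m, rfl⟩ : ∃ m, n = m + 1 := Nat.exists_eq_add_one.2 k.pos
  set z' := k.castSucc.succ.removeNth z with hz'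
  have interior_pos : 0 < Phi ω (Fin.init (Fin.tail z)) :=
    hω _ (fun _ _ h => hz (by simpa using h)) fun _ => hzH _
  obtain ⟨e, e_interior, Phi_e⟩ := exists_eq_zero_and_Phi_snoc_eq interior_pos.ne' g
  have e_last : 0 < e (z (Fin.last _)) := by
    rw [← Phi_e, Phi_snoc_of_init_eq_zero e_interior] at htail
    exact pos_of_mul_pos_left htail interior_pos.le
  have e_zero : 0 < (-1) ^ (m + 1) * e (z 0) := by
    rw [← Phi_e, Phi_snoc_of_tail_eq_zero e_interior] at hinit
    exact pos_of_mul_pos_left hinit interior_pos.le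
  have z'_mono : StrictMono z' := hz.removeNth _
  have z'_zero : z' 0 = z 0 := by simp [hz', Fin.removeNth]
  have z'_last : z' (Fin.last _) = z (Fin.last _) := by simp [hz', Fin.removeNth]
  have z'_interior (j : Fin m) :
      Fin.init (Fin.tail z') j = Fin.init (Fin.tail z) (k.succAbove j) := by
    simp [hz', Fin.init, Fin.tail, Fin.removeNth]
  have tail_pos : 0 < Phi ω (Fin.tail z') :=
    hω _ (fun _ _ h => z'_mono (by simpa using h)) fun _ => hzH _
  have init_pos : 0 < Phi ω (Fin.init z') :=
    hω _ (fun _ _ h => z'_mono (by simpa using h)) fun _ => hzH _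
  rw [← Phi_e, Phi_snoc_of_interior_eq_zero fun j => by rw [z'_interior, e_interior],
    z'_zero, z'_last]
  positivity

end Determinants

section Subdivision

theorem strictMono_fin_nat_induction {n : ℕ} {P : (Fin (n + 1) → ℕ) → Prop}
    (consecutive : ∀ a : ℕ, P fun j => a + j)
    (removeNth : ∀ z : Fin (n + 2) → ℕ, StrictMono z → P (Fin.tail z) → P (Fin.init z) →
      ∀ k : Fin n, P (k.castSucc.succ.removeNth z))
    (ι : Fin (n + 1) → ℕ) (hι : StrictMono ι) : P ι := by
  induction h_spread : ι (Fin.last n) - ι 0 using Nat.strong_induction_on generalizing ι with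
  | _ s ih =>
    subst h_spread
    by_cases h_gap : ∀ i : Fin n, ι i.succ = ι i.castSucc + 1
    · have h_eq : ι = fun j : Fin (n + 1) => ι 0 + (j : ℕ) := by
        funext j
        induction j using Fin.induction with
        | zero => simp
        | succ i ih => rw [h_gap, ih, Fin.val_succ, Fin.val_castSucc, add_assoc]
      exact h_eq ▸ consecutive (ι 0)
    · push Not at h_gap
      obtain ⟨k, hk⟩ := h_gap
      have hk_lt : ι k.castSucc < ι k.succ := hι Fin.castSucc_lt_succ
      set z : Fin (n + 2) → ℕ :=
        Fin.insertNth (α := fun _ => ℕ) k.castSucc.succ (ι k.castSucc + 1) ι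
      have hz : StrictMono z := Fin.strictMono_insertNth hι k _ (by omega) (by omega)
      have hzι : k.castSucc.succ.removeNth z = ι := Fin.removeNth_insertNth ..
      have hz_zero : z 0 = ι 0 := by rw [← hzι]; simp [Fin.removeNth]
      have hz_last : z (Fin.last _) = ι (Fin.last n) := by rw [← hzι]; simp [Fin.removeNth]
      have h_tail : z (Fin.last _) - z (Fin.succ 0) < ι (Fin.last n) - ι 0 := by
        have : z 0 < z (Fin.succ 0) := hz (Fin.succ_pos 0)
        have : z (Fin.succ 0) ≤ z (Fin.last _) := hz.monotone (Fin.le_last _)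
        omega
      have h_init : z (Fin.last n).castSucc - z 0 < ι (Fin.last n) - ι 0 := by
        have : z (Fin.last n).castSucc < z (Fin.last _) := hz (Fin.castSucc_lt_last _)
        have : z 0 ≤ z (Fin.last n).castSucc := hz.monotone (Fin.zero_le _)
        omega
      rw [← hzι]
      exact removeNth z hz (ih _ h_tail _ (fun _ _ h => hz (by simpa using h)) rfl)
        (ih _ h_init _ (fun _ _ h => hz (by simpa using h)) rfl) k

variable {n : ℕ} {ω : Fin n → ℝ → ℝ} {ω' : ℝ → ℝ} {H : Set ℝ}

theorem IsPosChebyshev.Phi_snoc_comp_pos (hω : IsPosChebyshev ω H) {g : ℝ → ℝ} {y : ℕ → ℝ}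
    (hy : StrictMono y) {N : ℕ} (hyH : ∀ i ≤ N, y i ∈ H)
    (h_consecutive : ∀ a, a + n ≤ N → 0 < Phi (Fin.snoc ω g) (y ∘ fun j => a + j))
    {ι : Fin (n + 1) → ℕ} (hι : StrictMono ι) (hιN : ι (Fin.last n) ≤ N) :
    0 < Phi (Fin.snoc ω g) (y ∘ ι) := by
  refine strictMono_fin_nat_induction
    (P := fun κ => κ (Fin.last n) ≤ N → 0 < Phi (Fin.snoc ω g) (y ∘ κ))
    (fun a ha => ?_) (fun z hz h_tail h_init k hzN => ?_) ι hι hιN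
  · exact h_consecutive a (by simpa using ha)
  · have hz_le (j : Fin (n + 2)) : z j ≤ N :=
      (hz.monotone (Fin.le_last j)).trans (by simpa [Fin.removeNth] using hzN)
    exact hω.Phi_snoc_removeNth_pos (hy.comp hz) (fun j => hyH _ (hz_le j))
      (h_tail (hz_le _)) (h_init (hz_le _)) k

theorem exists_consecutive_divDiff_le (hω : IsPosChebyshev ω H)
    (hω' : IsPosChebyshev (Fin.snoc ω ω') H) (f : ℝ → ℝ) {y : ℕ → ℝ} (hy : StrictMono y)
    {N : ℕ} (hyH : ∀ i ≤ N, y i ∈ H) {ι : Fin (n + 1) → ℕ} (hι : StrictMono ι)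
    (hιN : ι (Fin.last n) ≤ N) :
    ∃ a, a + n ≤ N ∧
      divDiff ω ω' f (y ∘ fun j => a + j) ≤ divDiff ω ω' f (y ∘ ι) := by
  by_contra! h
  set c := divDiff ω ω' f (y ∘ ι) with hc
  have Phi_sub (z : Fin (n + 1) → ℝ) : Phi (Fin.snoc ω (f - c • ω')) z =
      Phi (Fin.snoc ω f) z - c * Phi (Fin.snoc ω ω') z := by
    simp [← phiLinear_apply]
  have denom_pos {κ : Fin (n + 1) → ℕ} (hκ : StrictMono κ) (hκN : κ (Fin.last n) ≤ N) :
      0 < Phi (Fin.snoc ω ω') (y ∘ κ) :=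
    hω' _ (hy.comp hκ) fun j => hyH _ ((hκ.monotone (Fin.le_last j)).trans hκN)
  have residual_pos : 0 < Phi (Fin.snoc ω (f - c • ω')) (y ∘ ι) := by
    refine hω.Phi_snoc_comp_pos hy hyH (fun a ha => ?_) hι hιN
    have window_pos := denom_pos (κ := fun j => a + j) (fun i j hij => by simpa using hij)
      (by simpa using ha)
    have window_lt := h a ha
    rw [divDiff, lt_div_iff₀ window_pos] at window_lt
    rw [Phi_sub]
    exact sub_pos.2 window_lt
  rw [Phi_sub, hc, divDiff, div_mul_cancel₀ _ (denom_pos hι hιN).ne', sub_self] at residual_pos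
  exact residual_pos.false

end Subdivision

section Jensen

variable {n : ℕ} {ω : Fin n → ℝ → ℝ} {ω' : ℝ → ℝ} {I : Set ℝ}

theorem psum_one (j : Fin (n + 1)) : psum (fun _ : Fin n => (1 : ℝ)) j = j := by
  simp [psum, Fin.card_filter_val_lt, Nat.le_of_lt_succ j.isLt]

theorem jpts_one_add_mul (hn : n ≠ 0) (a h : ℝ) :
    jpts (fun _ : Fin n => (1 : ℝ)) a (a + n * h) = fun j : Fin (n + 1) => a + j * h := by
  funext j
  simp only [jpts, psum_one, Fin.val_last]
  field_simp
  ring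

theorem exists_subinterval_divDiff_jpts_one_le (hn : n ≠ 0) (hω : IsPosChebyshev ω I)
    (hω' : IsPosChebyshev (Fin.snoc ω ω') I) (f : ℝ → ℝ) {a b : ℝ} (hab : a < b)
    (hI : Icc a b ⊆ I) {m : ℕ} (hm : m ≠ 0) :
    ∃ c d, a ≤ c ∧ d ≤ b ∧ d - c = (b - a) / m ∧
      divDiff ω ω' f (jpts (fun _ => (1 : ℝ)) c d) ≤
        divDiff ω ω' f (jpts (fun _ => (1 : ℝ)) a b) := by
  obtain ⟨h, h_pos, rfl⟩ : ∃ h : ℝ, 0 < h ∧ b = a + n * (m * h) :=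
    ⟨(b - a) / (n * m), div_pos (sub_pos.2 hab) (by positivity), by field_simp; ring⟩
  have grid_mono : StrictMono fun i : ℕ => a + i * h := fun i j hij => by dsimp only; gcongr
  have grid_le {i : ℕ} (hi : i ≤ m * n) : a + i * h ≤ a + n * (m * h) := by
    have : (i : ℝ) ≤ m * n := mod_cast hi
    nlinarith
  have grid_mem (i : ℕ) (hi : i ≤ m * n) : a + i * h ∈ I :=
    hI ⟨le_add_of_nonneg_right (by positivity), grid_le hi⟩
  obtain ⟨i, hi, h_le⟩ := exists_consecutive_divDiff_le hω hω' f grid_mono grid_mem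
    (ι := fun j => m * j) (fun _ _ hij => by dsimp only; gcongr; omega) (by simp)
  refine ⟨a + i * h, a + i * h + n * h, le_add_of_nonneg_right (by positivity), ?_, ?_, ?_⟩
  · simpa [add_mul, add_assoc] using grid_le hi
  · field_simp
    ring
  · simp only [jpts_one_add_mul hn]
    convert h_le using 2 <;> (funext j; simp only [Function.comp_apply]; push_cast; ring)

theorem dinghasT_le {t : Fin n → ℝ} {f : ℝ → ℝ} {p : ℝ} {c : EReal}
    (h : ∀ δ > 0, ∃ a ∈ I, ∃ b ∈ I, a < b ∧ p ∈ Icc a b ∧ b - a < δ ∧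
      (divDiff ω ω' f (jpts t a b) : EReal) ≤ c) :
    dinghasT ω ω' t f I p ≤ c := by
  refine liminf_le_of_frequently_le' ((hasBasis_biInf_principal' ?_ ⟨1, one_pos⟩).frequently_iff.2
    fun {δ} hδ => ?_)
  · intro δ hδ ε hε
    exact ⟨min δ ε, lt_min hδ hε, by grind, by grind⟩
  · obtain ⟨a, ha, b, hb, hab, hp, h_lt, h_le⟩ := h δ hδ
    exact ⟨(a, b), ⟨ha, hb, hab, hp.1, hp.2, h_lt⟩, h_le⟩

end Jensen

theorem exists_mem_Icc_of_halving {P : ℝ → ℝ → Prop} {x y : ℝ} (hxy : x < y) (hP : P x y)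
    (halve : ∀ a b, a < b → P a b → ∃ c d, a ≤ c ∧ d ≤ b ∧ d - c = (b - a) / 2 ∧ P c d) :
    ∃ p ∈ Icc x y, ∀ δ > 0, ∃ a b, a < b ∧ p ∈ Icc a b ∧ b - a < δ ∧ P a b := by
  choose! c d hc hd h_len hP' using halve
  let u : ℕ → ℝ × ℝ := fun k => (fun q => (c q.1 q.2, d q.1 q.2))^[k] (x, y)
  have u_succ (k : ℕ) : u (k + 1) = (c (u k).1 (u k).2, d (u k).1 (u k).2) :=
    Function.iterate_succ_apply' ..
  have hu (k : ℕ) : (u k).1 < (u k).2 ∧ P (u k).1 (u k).2 := by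
    induction k with
    | zero => exact ⟨hxy, hP⟩
    | succ k ih =>
      rw [u_succ]
      exact ⟨sub_pos.1 (h_len _ _ ih.1 ih.2 ▸ half_pos (sub_pos.2 ih.1)), hP' _ _ ih.1 ih.2⟩
  have u_length (k : ℕ) : (u k).2 - (u k).1 = (y - x) * (1 / 2) ^ k := by
    induction k with
    | zero => simp [u]
    | succ k ih => rw [u_succ, h_len _ _ (hu k).1 (hu k).2, ih]; ring
  have left_mono : Monotone fun k => (u k).1 := monotone_nat_of_le_succ fun k => by
    rw [u_succ]; exact hc _ _ (hu k).1 (hu k).2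
  have right_anti : Antitone fun k => (u k).2 := antitone_nat_of_succ_le fun k => by
    rw [u_succ]; exact hd _ _ (hu k).1 (hu k).2
  have sup_mem := mem_iInter.1
    (left_mono.ciSup_mem_iInter_Icc_of_antitone right_anti fun k => (hu k).1.le)
  refine ⟨_, sup_mem 0, fun δ hδ => ?_⟩
  obtain ⟨k, hk⟩ := exists_pow_lt_of_lt_one (div_pos hδ (sub_pos.2 hxy)) one_half_lt_one
  refine ⟨_, _, (hu k).1, sup_mem k, ?_, (hu k).2⟩
  rwa [u_length, ← lt_div_iff₀' (sub_pos.2 hxy)]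

/-- **Theorem 7 (mean value inequality for Jensen type divided differences).**
For every `x < y` in `I` there is a point `p ∈ [x,y]` with
`[x, ((n−1)x+y)/n, …, (x+(n−1)y)/n, y; f]_{ω*} ≥ D̲_{(𝟏ₙ,ω*)} f(p)`. -/
theorem jensen_divDiff_ge_dinghas_at_some_point
    (n : ℕ) (hn : 0 < n) (I : Set ℝ) (hI : I.OrdConnected)
    (hne : ∃ a ∈ I, ∃ b ∈ I, a < b)
    (ω : Fin n → ℝ → ℝ) (ω' : ℝ → ℝ)
    (hω : IsPosChebyshev ω I) (hωs : IsPosChebyshev (Fin.snoc ω ω') I)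
    (f : ℝ → ℝ) :
    ∀ x ∈ I, ∀ y ∈ I, x < y →
      ∃ p ∈ Set.Icc x y,
        dinghasT ω ω' (fun _ => (1 : ℝ)) f I p ≤
          (divDiff ω ω' f (jpts (fun _ => (1 : ℝ)) x y) : EReal) := by
  intro x hx y hy hxy
  have hxyI : Icc x y ⊆ I := hI.out hx hy
  let P (a b : ℝ) : Prop := Icc a b ⊆ Icc x y ∧
    divDiff ω ω' f (jpts (fun _ => (1 : ℝ)) a b) ≤ divDiff ω ω' f (jpts (fun _ => (1 : ℝ)) x y)
  have halve (a b : ℝ) (hab : a < b) (hP : P a b) :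
      ∃ c d, a ≤ c ∧ d ≤ b ∧ d - c = (b - a) / 2 ∧ P c d := by
    obtain ⟨c, d, hac, hdb, h_len, h_le⟩ := exists_subinterval_divDiff_jpts_one_le hn.ne' hω hωs f
      hab (hP.1.trans hxyI) two_ne_zero
    exact ⟨c, d, hac, hdb, mod_cast h_len, (Icc_subset_Icc hac hdb).trans hP.1, h_le.trans hP.2⟩
  obtain ⟨p, hp, h_small⟩ := exists_mem_Icc_of_halving hxy ⟨Subset.rfl, le_rfl⟩ halve
  refine ⟨p, hp, dinghasT_le fun δ hδ => ?_⟩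
  obtain ⟨a, b, hab, hpab, h_lt, hP⟩ := h_small δ hδ
  exact ⟨a, hxyI (hP.1 (left_mem_Icc.2 hab.le)), b, hxyI (hP.1 (right_mem_Icc.2 hab.le)), hab,
    hpab, h_lt, EReal.coe_le_coe_iff.2 hP.2⟩
end

section
/- Let I ⊆ ℝ be a nondegenerate interval, let ω = (ω_1,ω_2) be a 2-dimensional positive Chebyshev system over I, and let (t_1,t_2) ∈ ℝ₊². A function f : I → ℝ is symmetrically ((t_1,t_2),ω)-convex on I if and only if, for every p ∈ I, there exists a neighborhood U of p such that f is symmetrically ((t_1,t_2),ω)-convex on U ∩ I; that is, symmetric ((t_1,t_2),ω)-convexity is a localizable property. -/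
/-!
Write `W(x, y)` for `Φ_ω(x, y)` and `D(x, y, z)` for `Φ_{(ω,f)}(x, y, z)`. The Plücker relations
express `W(b, c) D(a, c, d)` and `W(b, c) D(a, b, d)` as combinations of `D(a, b, c)` and
`D(b, c, d)` with positive coefficients. Hence, along a chain `a < b < c < d < e`, nonnegativity of
`D` at consecutive triples passes to `(a, c, e)`. If `c` divides `[a, e]` in the ratio `t₁ : t₂`,
then `b` and `d` can be chosen so that the three consecutive triples divide shorter intervals in
the ratios `t₁ : t₂`, `t₁ : t₂` and `t₂ : t₁`, all shorter by a factor bounded away from `1`;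
this is where the symmetry is needed. Iterating, one arrives at intervals below the Lebesgue
number of the given cover of `[a, e]`.
-/

open AffineMap Filter Set Topology Uniformity

section Localization

theorem forall_of_contraction {α : Type*} {P : α → Prop} {μ : α → ℝ} {q δ : ℝ}
    (hq₀ : 0 ≤ q) (hq₁ : q < 1) (hδ : 0 < δ) (small : ∀ a, μ a < δ → P a)
    (step : ∀ a, (∀ b, μ b ≤ q * μ a → P b) → P a) (a : α) : P a := by
  have of_pow_mul_lt : ∀ (n : ℕ) (a : α), q ^ n * μ a < δ → P a := by
    intro n
    induction n with
    | zero => simpa using small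
    | succ n ih =>
      refine fun a ha => step a fun b hb => ih b ?_
      calc q ^ n * μ b ≤ q ^ n * (q * μ a) := by gcongr
        _ = q ^ (n + 1) * μ a := by ring
        _ < δ := ha
  have tendsto_zero : Tendsto (fun n => q ^ n * μ a) atTop (𝓝 0) := by
    simpa using (tendsto_pow_atTop_nhds_zero_of_lt_one hq₀ hq₁).mul_const (μ a)
  obtain ⟨n, hn⟩ := (tendsto_zero.eventually_lt_const hδ).exists
  exact of_pow_mul_lt n a hn

theorem exists_mem_uniformity_forall_of_locally {X : Type*} [UniformSpace X] {K : Set X}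
    (hK : IsCompact K) {R : X → X → Prop}
    (hloc : ∀ p ∈ K, ∃ U ∈ 𝓝 p, ∀ x ∈ U ∩ K, ∀ z ∈ U ∩ K, R x z) :
    ∃ V ∈ 𝓤 X, ∀ x ∈ K, ∀ z ∈ K, (x, z) ∈ V → R x z := by
  choose U hU hR using hloc
  obtain ⟨V, hV, hball⟩ := lebesgue_number_lemma_nhds' hK hU
  refine ⟨V, hV, fun x hx z hz hxz => ?_⟩
  obtain ⟨⟨p, hp⟩, hpU⟩ := hball x hx
  exact hR p hp x ⟨hpU (refl_mem_uniformity hV), hx⟩ z ⟨hpU hxz, hz⟩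

theorem forall_lt_of_locally_of_contraction {I : Set ℝ} (hI : I.OrdConnected)
    {R : ℝ → ℝ → Prop} {q : ℝ} (hq₀ : 0 ≤ q) (hq₁ : q < 1)
    (hloc : ∀ p ∈ I, ∃ U ∈ 𝓝 p, ∀ x ∈ U ∩ I, ∀ z ∈ U ∩ I, x < z → R x z)
    (step : ∀ x ∈ I, ∀ z ∈ I, x < z →
      (∀ u v, x ≤ u → u < v → v ≤ z → v - u ≤ q * (z - x) → R u v) → R x z) :
    ∀ x ∈ I, ∀ z ∈ I, x < z → R x z := by
  intro x hx z hz hxz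
  have hsub : Icc x z ⊆ I := hI.out hx hz
  have hloc_Icc : ∀ p ∈ Icc x z, ∃ U ∈ 𝓝 p, ∀ u ∈ U ∩ Icc x z, ∀ v ∈ U ∩ Icc x z,
      u < v → R u v := by
    intro p hp
    obtain ⟨U, hU, hR⟩ := hloc p (hsub hp)
    exact ⟨U, hU, fun u hu v hv => hR u ⟨hu.1, hsub hu.2⟩ v ⟨hv.1, hsub hv.2⟩⟩
  obtain ⟨V, hV, small⟩ := exists_mem_uniformity_forall_of_locally isCompact_Icc hloc_Icc
  obtain ⟨δ, hδ, dist_lt⟩ := Metric.mem_uniformity_dist.1 hV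
  refine forall_of_contraction (α := ℝ × ℝ) (μ := fun s => s.2 - s.1)
    (P := fun s => x ≤ s.1 → s.1 < s.2 → s.2 ≤ z → R s.1 s.2) hq₀ hq₁ hδ ?_ ?_
    (x, z) le_rfl hxz le_rfl
  · rintro ⟨u, v⟩ hlt hxu huv hvz
    refine small u ⟨hxu, huv.le.trans hvz⟩ v ⟨hxu.trans huv.le, hvz⟩ (dist_lt ?_) huv
    rwa [dist_comm, Real.dist_eq, abs_of_pos (sub_pos.2 huv)]
  · rintro ⟨u, v⟩ ih hxu huv hvz
    exact step u (hsub ⟨hxu, huv.le.trans hvz⟩) v (hsub ⟨hxu.trans huv.le, hvz⟩) huv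
      fun u' v' huu' hu'v' hv'v hle => ih (u', v') hle (hxu.trans huu') hu'v' (hv'v.trans hvz)

end Localization

section Determinants

variable {ω : Fin 2 → ℝ → ℝ} {f : ℝ → ℝ}

theorem Phi_pair (ω : Fin 2 → ℝ → ℝ) (x y : ℝ) :
    Phi ω ![x, y] = ω 0 x * ω 1 y - ω 0 y * ω 1 x := by
  simp [Phi, Matrix.det_fin_two]

theorem Phi_snoc_triple (ω : Fin 2 → ℝ → ℝ) (f : ℝ → ℝ) (x y z : ℝ) :
    Phi (Fin.snoc ω f) ![x, y, z] =
      f x * Phi ω ![y, z] - f y * Phi ω ![x, z] + f z * Phi ω ![x, y] := by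
  have snoc_zero : (Fin.snoc ω f : Fin 3 → ℝ → ℝ) 0 = ω 0 := rfl
  have snoc_one : (Fin.snoc ω f : Fin 3 → ℝ → ℝ) 1 = ω 1 := rfl
  have snoc_two : (Fin.snoc ω f : Fin 3 → ℝ → ℝ) 2 = f := rfl
  rw [Phi_pair, Phi_pair, Phi_pair, Phi, Matrix.det_fin_three]
  simp only [Matrix.of_apply, Matrix.cons_val, snoc_zero, snoc_one, snoc_two]
  ring

theorem IsPosChebyshev.Phi_pair_pos {H : Set ℝ} (hω : IsPosChebyshev ω H) {x y : ℝ}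
    (hx : x ∈ H) (hy : y ∈ H) (hxy : x < y) : 0 < Phi ω ![x, y] :=
  hω ![x, y] (by simpa [Fin.strictMono_iff_lt_succ] using hxy)
    (by simp [Fin.forall_fin_two, hx, hy])

theorem Phi_snoc_nonneg_of_drop_second {a b c d : ℝ} (hac : 0 ≤ Phi ω ![a, c])
    (hbc : 0 < Phi ω ![b, c]) (hcd : 0 ≤ Phi ω ![c, d])
    (habc : 0 ≤ Phi (Fin.snoc ω f) ![a, b, c]) (hbcd : 0 ≤ Phi (Fin.snoc ω f) ![b, c, d]) :
    0 ≤ Phi (Fin.snoc ω f) ![a, c, d] := by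
  have pluecker : Phi ω ![b, c] * Phi (Fin.snoc ω f) ![a, c, d] =
      Phi ω ![a, c] * Phi (Fin.snoc ω f) ![b, c, d] +
        Phi ω ![c, d] * Phi (Fin.snoc ω f) ![a, b, c] := by
    simp only [Phi_snoc_triple, Phi_pair]
    ring
  refine nonneg_of_mul_nonneg_right ?_ hbc
  rw [pluecker]
  positivity

theorem Phi_snoc_nonneg_of_drop_third {a b c d : ℝ} (hab : 0 ≤ Phi ω ![a, b])
    (hbc : 0 < Phi ω ![b, c]) (hbd : 0 ≤ Phi ω ![b, d])
    (habc : 0 ≤ Phi (Fin.snoc ω f) ![a, b, c]) (hbcd : 0 ≤ Phi (Fin.snoc ω f) ![b, c, d]) :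
    0 ≤ Phi (Fin.snoc ω f) ![a, b, d] := by
  have pluecker : Phi ω ![b, c] * Phi (Fin.snoc ω f) ![a, b, d] =
      Phi ω ![b, d] * Phi (Fin.snoc ω f) ![a, b, c] +
        Phi ω ![a, b] * Phi (Fin.snoc ω f) ![b, c, d] := by
    simp only [Phi_snoc_triple, Phi_pair]
    ring
  refine nonneg_of_mul_nonneg_right ?_ hbc
  rw [pluecker]
  positivity

theorem IsPosChebyshev.Phi_snoc_nonneg_of_chain {a b c d e : ℝ}
    (hω : IsPosChebyshev ω (Icc a e)) (hab : a < b) (hbc : b < c) (hcd : c < d) (hde : d < e)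
    (habc : 0 ≤ Phi (Fin.snoc ω f) ![a, b, c]) (hbcd : 0 ≤ Phi (Fin.snoc ω f) ![b, c, d])
    (hcde : 0 ≤ Phi (Fin.snoc ω f) ![c, d, e]) :
    0 ≤ Phi (Fin.snoc ω f) ![a, c, e] := by
  have pair_pos : ∀ {u v : ℝ}, a ≤ u → u < v → v ≤ e → 0 < Phi ω ![u, v] :=
    fun hau huv hve => hω.Phi_pair_pos ⟨hau, huv.le.trans hve⟩ ⟨hau.trans huv.le, hve⟩ huv
  have hac_pos := pair_pos le_rfl (hab.trans hbc) (hcd.trans hde).le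
  have hcd_pos := pair_pos (hab.trans hbc).le hcd hde.le
  have hacd : 0 ≤ Phi (Fin.snoc ω f) ![a, c, d] :=
    Phi_snoc_nonneg_of_drop_second hac_pos.le (pair_pos hab.le hbc (hcd.trans hde).le)
      hcd_pos.le habc hbcd
  exact Phi_snoc_nonneg_of_drop_third hac_pos.le hcd_pos
    (pair_pos (hab.trans hbc).le (hcd.trans hde) le_rfl).le hacd hcde

end Determinants

/-- Convexity of `f` with respect to `ω`, tested only at the triple formed by the end points of
`[x, z]` and the point dividing it in the ratio `c : 1 - c`. For `c = t₁ / (t₁ + t₂)` these are the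
triples that occur in `((t₁, t₂), ω)`-convexity. -/
def OmegaConvexAt (ω : Fin 2 → ℝ → ℝ) (f : ℝ → ℝ) (c x z : ℝ) : Prop :=
  0 ≤ Phi (Fin.snoc ω f) ![x, lineMap x z c, z]

section SymmetricConvexity

variable {ω : Fin 2 → ℝ → ℝ} {f : ℝ → ℝ}

theorem psum_pair (s t : ℝ) : psum ![s, t] = ![0, s, s + t] := by
  funext j
  fin_cases j <;> simp [psum, Finset.sum_filter]

theorem tOmegaConvexOn_pair_iff {s t : ℝ} (hst : 0 < s + t) {J : Set ℝ} :
    TOmegaConvexOn ω ![s, t] J f ↔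
      ∀ x ∈ J, ∀ z ∈ J, x < z → OmegaConvexAt ω f (s / (s + t)) x z := by
  have psum_last : psum ![s, t] (Fin.last 2) = s + t := by simp [psum_pair]
  have mid_eq (x h : ℝ) : x + s * h = lineMap x (x + (s + t) * h) (s / (s + t)) := by
    rw [lineMap_apply_ring', add_sub_cancel_left]
    field_simp
    ring
  have nodes (x h : ℝ) : (fun j => x + psum ![s, t] j * h) =
      ![x, lineMap x (x + (s + t) * h) (s / (s + t)), x + (s + t) * h] := by
    funext j
    fin_cases j <;> simp [psum_pair, ← mid_eq]
  simp only [TOmegaConvexOn, psum_last, nodes]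
  constructor
  · intro H x hx z hz hxz
    have hz_eq : x + (s + t) * ((z - x) / (s + t)) = z := by field_simp; ring
    have := H x hx ((z - x) / (s + t)) (div_pos (sub_pos.2 hxz) hst) (hz_eq.symm ▸ hz)
    rwa [hz_eq] at this
  · exact fun H x hx h hh hz => H x hx _ hz (lt_add_of_pos_right x (mul_pos hst hh))

theorem symmetrically_tOmegaConvexOn_pair_iff {s t : ℝ} (hst : 0 < s + t) {J : Set ℝ} :
    TOmegaConvexOn ω ![s, t] J f ∧ TOmegaConvexOn ω ![t, s] J f ↔
      ∀ x ∈ J, ∀ z ∈ J, x < z →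
        OmegaConvexAt ω f (s / (s + t)) x z ∧ OmegaConvexAt ω f (1 - s / (s + t)) x z := by
  have one_sub_ratio : 1 - s / (s + t) = t / (t + s) := by
    rw [add_comm t s, one_sub_div hst.ne', add_sub_cancel_left]
  rw [tOmegaConvexOn_pair_iff hst, tOmegaConvexOn_pair_iff (add_comm s t ▸ hst), one_sub_ratio]
  simp only [← forall_and]

theorem OmegaConvexAt.of_subintervals {c x z : ℝ} (hc : c ∈ Ioo 0 1)
    (hω : IsPosChebyshev ω (Icc x z)) (hxz : x < z)
    (hsub : ∀ u v, x ≤ u → u < v → v ≤ z → v - u ≤ max c (1 - c) * (z - x) →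
      OmegaConvexAt ω f c u v ∧ OmegaConvexAt ω f (1 - c) u v) :
    OmegaConvexAt ω f c x z := by
  have hc' : 0 < 1 - c := sub_pos.2 hc.2
  set y := lineMap x z c with hy
  set b := lineMap x y c with hb
  set d := lineMap y z (1 - c) with hd
  have hxy : x < y := (left_lt_lineMap_iff_lt hc.1).2 hxz
  have hyz : y < z := (lineMap_lt_right_iff_lt hc.2).2 hxz
  have hxb : x < b := (left_lt_lineMap_iff_lt hc.1).2 hxy
  have hby : b < y := (lineMap_lt_right_iff_lt hc.2).2 hxy
  have hyd : y < d := (left_lt_lineMap_iff_lt hc').2 hyz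
  have hdz : d < z := (lineMap_lt_right_iff_lt (sub_lt_self 1 hc.1)).2 hyz
  have length_xy : y - x = c * (z - x) := by rw [hy, lineMap_apply_ring]; ring
  have length_bd : d - b = (1 - c) * (z - x) := by
    simp only [hd, hb, hy, lineMap_apply_ring]; ring
  have length_yz : z - y = (1 - c) * (z - x) := by rw [hy, lineMap_apply_ring]; ring
  have hy_mid : lineMap b d c = y := by
    simp only [hd, hb, hy, lineMap_apply_ring]; ring
  have left_le : c * (z - x) ≤ max c (1 - c) * (z - x) :=
    mul_le_mul_of_nonneg_right (le_max_left _ _) (sub_pos.2 hxz).le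
  have right_le : (1 - c) * (z - x) ≤ max c (1 - c) * (z - x) :=
    mul_le_mul_of_nonneg_right (le_max_right _ _) (sub_pos.2 hxz).le
  have hxby := (hsub x y le_rfl hxy hyz.le (length_xy.trans_le left_le)).1
  have hbyd := (hsub b d hxb.le (hby.trans hyd) hdz.le (length_bd.trans_le right_le)).1
  have hydz := (hsub y z hxy.le hyz le_rfl (length_yz.trans_le right_le)).2
  rw [OmegaConvexAt, hy_mid] at hbyd
  exact hω.Phi_snoc_nonneg_of_chain hxb hby hyd hdz hxby hbyd hydz

theorem OmegaConvexAt.symm_of_subintervals {c x z : ℝ} (hc : c ∈ Ioo 0 1)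
    (hω : IsPosChebyshev ω (Icc x z)) (hxz : x < z)
    (hsub : ∀ u v, x ≤ u → u < v → v ≤ z → v - u ≤ max c (1 - c) * (z - x) →
      OmegaConvexAt ω f c u v ∧ OmegaConvexAt ω f (1 - c) u v) :
    OmegaConvexAt ω f c x z ∧ OmegaConvexAt ω f (1 - c) x z := by
  have hc' : 1 - c ∈ Ioo 0 1 := ⟨sub_pos.2 hc.2, sub_lt_self 1 hc.1⟩
  refine ⟨of_subintervals hc hω hxz hsub, of_subintervals hc' hω hxz ?_⟩
  simpa only [sub_sub_cancel, max_comm, and_comm] using hsub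

end SymmetricConvexity

/-- **Corollary 11 (localizability of symmetric `((t₁,t₂),ω)`-convexity).**
For `n = 2` and positive `t₁, t₂`, the function `f` is symmetrically
`((t₁,t₂),ω)`-convex on `I` (i.e. both `((t₁,t₂),ω)`- and `((t₂,t₁),ω)`-convex on `I`)
if and only if every point `p ∈ I` has a neighborhood `U` such that `f` is
symmetrically `((t₁,t₂),ω)`-convex on `U ∩ I`. -/
theorem symmetrically_tOmegaConvexOn_iff_locally
    (I : Set ℝ) (hI : I.OrdConnected) (hne : ∃ a ∈ I, ∃ b ∈ I, a < b)
    (ω : Fin 2 → ℝ → ℝ) (hω : IsPosChebyshev ω I)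
    (t₁ t₂ : ℝ) (ht₁ : 0 < t₁) (ht₂ : 0 < t₂) (f : ℝ → ℝ) :
    (TOmegaConvexOn ω ![t₁, t₂] I f ∧ TOmegaConvexOn ω ![t₂, t₁] I f) ↔
      ∀ p ∈ I, ∃ U ∈ nhds p,
        TOmegaConvexOn ω ![t₁, t₂] (U ∩ I) f ∧ TOmegaConvexOn ω ![t₂, t₁] (U ∩ I) f := by
  have ratio_mem : t₁ / (t₁ + t₂) ∈ Ioo 0 1 :=
    ⟨by positivity, (div_lt_one (by positivity)).2 (lt_add_of_pos_right t₁ ht₂)⟩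
  simp only [symmetrically_tOmegaConvexOn_pair_iff (add_pos ht₁ ht₂)]
  constructor
  · exact fun h p _ => ⟨univ, univ_mem, fun x hx z hz => h x hx.2 z hz.2⟩
  · intro hloc
    refine forall_lt_of_locally_of_contraction hI (le_max_of_le_left ratio_mem.1.le)
      (max_lt ratio_mem.2 (sub_lt_self 1 ratio_mem.1)) hloc fun x hx z hz hxz hsub => ?_
    have hω_Icc : IsPosChebyshev ω (Icc x z) :=
      fun y hy hmem => hω y hy fun j => hI.out hx hz (hmem j)
    exact OmegaConvexAt.symm_of_subintervals ratio_mem hω_Icc hxz hsub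
end
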